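/- Division Lemma: Given reduced words u ≼ v, there exists a reduced word w, unique up to permutation, such that for every reduced word x: [x·u] ≼ v if and only if x ≼ w. -/

import Mathlib

variable {V : Type*} [DecidableEq V] [Fintype V]

/-- A letter is a nonempty connected subset of the graph `G`
(connectedness of the induced subgraph includes nonemptiness). -/
def IsLetter (G : SimpleGraph V) (s : Finset V) : Prop :=
  (G.induce (↑s : Set V)).Connected

/-- The type of letters of `G`. -/
def Letter (G : SimpleGraph V) := {s : Finset V // IsLetter G s}

/-- A word is a finite sequence of letters. -/
abbrev Word (G : SimpleGraph V) := List (Letter G)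

/-- Two letters commute iff their union is not a letter (is disconnected). -/
def LCommute (G : SimpleGraph V) (s t : Letter G) : Prop :=
  ¬ IsLetter G (s.1 ∪ t.1)

/-- Two words commute if their letters pairwise commute. -/
def WCommute (G : SimpleGraph V) (u v : Word G) : Prop :=
  ∀ s ∈ u, ∀ t ∈ v, LCommute G s t

/-- One swap of two adjacent commuting letters. -/
def LSwapStep (G : SimpleGraph V) (w w' : Word G) : Prop :=
  ∃ (a b : Word G) (s t : Letter G), LCommute G s t ∧
    w = a ++ s :: t :: b ∧ w' = a ++ t :: s :: b

/-- Equivalence (`≈`) of words: sequences of swaps of adjacent commuting letters. -/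
def WEquiv (G : SimpleGraph V) : Word G → Word G → Prop :=
  Relation.ReflTransGen (LSwapStep G)

/-- A word is reduced if there is no pair of comparable letters such that the
smaller one commutes with all letters strictly in between. -/
def WIsReduced (G : SimpleGraph V) (w : Word G) : Prop :=
  ¬ ∃ (a b c : Word G) (s t : Letter G),
      w = a ++ s :: (b ++ t :: c) ∧
      ((s.1 ⊆ t.1 ∧ ∀ r ∈ b, LCommute G s r) ∨
       (t.1 ⊆ s.1 ∧ ∀ r ∈ b, LCommute G t r))

/-- A splitting of a letter `s`: a (possibly empty) word whose letters are
proper subsets of `s`. -/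
def IsSplitting (G : SimpleGraph V) (x : Word G) (s : Letter G) : Prop :=
  ∀ t ∈ x, t.1 ⊂ s.1

/-- `SplitStep G u v`: `u` is obtained from `v` by replacing one occurrence of a
letter by a splitting of it. -/
def SplitStep (G : SimpleGraph V) (u v : Word G) : Prop :=
  ∃ (a b x : Word G) (s : Letter G),
    v = a ++ s :: b ∧ IsSplitting G x s ∧ u = a ++ x ++ b

/-- One step of the splitting order up to equivalence. -/
def PrecStep (G : SimpleGraph V) (u v : Word G) : Prop :=
  ∃ u' v', WEquiv G v v' ∧ SplitStep G u' v' ∧ WEquiv G u u'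

/-- The splitting order `≺` on words. -/
def WPrec (G : SimpleGraph V) : Word G → Word G → Prop :=
  Relation.TransGen (PrecStep G)

/-- `u ≼ v` : `u ≺ v` or `u ≈ v`. -/
def WPreceq (G : SimpleGraph V) (u v : Word G) : Prop :=
  WPrec G u v ∨ WEquiv G u v

/-- Absorption: if `s ⊆ t`, replace a subword `s·t` (or `t·s`) by `t`. -/
def AbsorbStep (G : SimpleGraph V) (w w' : Word G) : Prop :=
  ∃ (a b : Word G) (s t : Letter G), s.1 ⊆ t.1 ∧
    (w = a ++ s :: t :: b ∨ w = a ++ t :: s :: b) ∧ w' = a ++ t :: b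

/-- A non-splitting reduction step: Commutation or Absorption. -/
def NSStep (G : SimpleGraph V) (w w' : Word G) : Prop :=
  LSwapStep G w w' ∨ AbsorbStep G w w'

/-- `NSRed G u v`: `v` is a non-splitting reduction of `u`, i.e. a reduced word
obtained from `u` by Commutation and Absorption steps only. -/
def NSRed (G : SimpleGraph V) (u v : Word G) : Prop :=
  Relation.ReflTransGen (NSStep G) u v ∧ WIsReduced G v

/-- The letter `t` is left-absorbed by the word `w`: `t` is contained in some
letter of `w` and commutes with all earlier letters. -/
def LetterLeftAbsorbed (G : SimpleGraph V) (t : Letter G) (w : Word G) : Prop :=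
  ∃ (a b : Word G) (s : Letter G), w = a ++ s :: b ∧ t.1 ⊆ s.1 ∧ ∀ r ∈ a, LCommute G t r

/-- The letter `t` is right-absorbed by the word `w`. -/
def LetterRightAbsorbed (G : SimpleGraph V) (t : Letter G) (w : Word G) : Prop :=
  ∃ (a b : Word G) (s : Letter G), w = a ++ s :: b ∧ t.1 ⊆ s.1 ∧ ∀ r ∈ b, LCommute G t r

/-- The letter `t` is properly left-absorbed by the word `w`. -/
def LetterProperLeftAbsorbed (G : SimpleGraph V) (t : Letter G) (w : Word G) : Prop :=
  ∃ (a b : Word G) (s : Letter G), w = a ++ s :: b ∧ t.1 ⊂ s.1 ∧ ∀ r ∈ a, LCommute G t r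

/-- The letter `t` is properly right-absorbed by the word `w`. -/
def LetterProperRightAbsorbed (G : SimpleGraph V) (t : Letter G) (w : Word G) : Prop :=
  ∃ (a b : Word G) (s : Letter G), w = a ++ s :: b ∧ t.1 ⊂ s.1 ∧ ∀ r ∈ b, LCommute G t r

/-- A word `u` is left-absorbed by `w` if each of its letters is. -/
def LeftAbsorbed (G : SimpleGraph V) (u w : Word G) : Prop :=
  ∀ t ∈ u, LetterLeftAbsorbed G t w

/-- A word `u` is right-absorbed by `w` if each of its letters is. -/
def RightAbsorbed (G : SimpleGraph V) (u w : Word G) : Prop :=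
  ∀ t ∈ u, LetterRightAbsorbed G t w

/-- A word `u` is properly left-absorbed by `w` if each of its letters is. -/
def ProperLeftAbsorbed (G : SimpleGraph V) (u w : Word G) : Prop :=
  ∀ t ∈ u, LetterProperLeftAbsorbed G t w

/-- A word `u` is properly right-absorbed by `w` if each of its letters is. -/
def ProperRightAbsorbed (G : SimpleGraph V) (u w : Word G) : Prop :=
  ∀ t ∈ u, LetterProperRightAbsorbed G t w

/-- A commuting word: its letters pairwise commute. -/
def IsCommuting (G : SimpleGraph V) (u : Word G) : Prop :=
  List.Pairwise (LCommute G) u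

/-- The letter `s` is an end of the word `u` if `u ≈ v·s` for some `v`. -/
def IsEnd (G : SimpleGraph V) (s : Letter G) (u : Word G) : Prop :=
  ∃ v, WEquiv G u (v ++ [s])

/-- `t` is the final segment of `u`: the commuting word consisting of all ends of `u`. -/
def IsFinalSegment (G : SimpleGraph V) (t u : Word G) : Prop :=
  IsCommuting G t ∧ ∀ s, s ∈ t ↔ IsEnd G s u

/-!
Call `x` *dominated* by `v` if `x ≈ x₁⋯xₙ`, where `v = v₁⋯vₙ` and all letters of `xᵢ` are contained
in `vᵢ`. This is a preorder, it is unchanged under Commutation and Absorption on either side, and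
between reduced words it is `≼`. Hence `[x·u] ≼ v` means that `x·u` is dominated by `v`, and
uniqueness of `v/u` is antisymmetry of `≼`.

For existence one divides by the letters of `u` one at a time, from the last to the first. If
`v = a·s·b`, where `s` is the last letter of `v` containing `t`, then `x·t` is dominated by `v` iff
`x` is dominated by `a·s·d`, where `d` is the largest word dominated by `b` whose letters commute
with `t`; it is obtained by replacing each letter of `b` by the product of the maximal letters
inside it that commute with `t`.
-/

section

variable {α : Type*} {G : SimpleGraph α}

/-! ### Commutation of letters -/

theorem Letter.nonempty (s : Letter G) : s.1.Nonempty :=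
  Finset.coe_nonempty.1 (Set.nonempty_coe_sort.1 s.2.nonempty)

theorem finite_setOf_letter_subset (s : Finset α) : {r : Letter G | r.1 ⊆ s}.Finite :=
  (s.powerset.finite_toSet.preimage Subtype.val_injective.injOn).subset fun _ hr =>
    Finset.mem_coe.2 (Finset.mem_powerset.2 hr)

variable [DecidableEq α]

theorem IsLetter.union {s t : Finset α} (hs : IsLetter G s) (ht : IsLetter G t)
    (h : (s ∩ t).Nonempty) : IsLetter G (s ∪ t) := by
  rw [IsLetter, Finset.coe_union]
  exact SimpleGraph.induce_union_connected hs.preconnected ht.preconnected (mod_cast h)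

theorem IsLetter.union_of_adj {s t : Finset α} (hs : IsLetter G s) (ht : IsLetter G t) {a b : α}
    (ha : a ∈ s) (hb : b ∈ t) (hab : G.Adj a b) : IsLetter G (s ∪ t) := by
  rw [IsLetter, Finset.coe_union]
  exact SimpleGraph.connected_induce_union hs.preconnected ht.preconnected ha hb hab

theorem lCommute_iff {s t : Letter G} :
    LCommute G s t ↔ ∀ a ∈ s.1, ∀ b ∈ t.1, a ≠ b ∧ ¬ G.Adj a b := by
  refine ⟨fun h a ha b hb => ⟨?_, fun hab => h (s.2.union_of_adj t.2 ha hb hab)⟩, fun h hst => ?_⟩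
  · rintro rfl
    exact h (s.2.union t.2 ⟨a, Finset.mem_inter.2 ⟨ha, hb⟩⟩)
  · obtain ⟨a, ha⟩ := s.nonempty
    obtain ⟨b, hb⟩ := t.nonempty
    obtain ⟨p⟩ := hst.preconnected ⟨a, by simp [ha]⟩ ⟨b, by simp [hb]⟩
    obtain ⟨d, -, hd, hd'⟩ :=
      p.exists_boundary_dart {x | x.1 ∈ s.1} ha fun hbs => (h b hbs b hb).1 rfl
    have hdt : d.snd.1 ∈ t.1 := (Finset.mem_union.1 (Finset.mem_coe.1 d.snd.2)).resolve_left hd'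
    exact (h _ hd _ hdt).2 d.adj

namespace LCommute

theorem symm {s t : Letter G} (h : LCommute G s t) : LCommute G t s := by
  rwa [LCommute, Finset.union_comm]

theorem mono {s t s' t' : Letter G} (hs : s'.1 ⊆ s.1) (ht : t'.1 ⊆ t.1) (h : LCommute G s t) :
    LCommute G s' t' :=
  lCommute_iff.2 fun a ha b hb => lCommute_iff.1 h a (hs ha) b (ht hb)

theorem not_subset {s t : Letter G} (h : LCommute G s t) : ¬ s.1 ⊆ t.1 := fun hst =>
  have ⟨a, ha⟩ := s.nonempty
  (lCommute_iff.1 h a ha a (hst ha)).1 rfl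

theorem of_subset_union {r s t q : Letter G} (hq : q.1 ⊆ s.1 ∪ t.1) (hs : LCommute G r s)
    (ht : LCommute G r t) : LCommute G r q :=
  lCommute_iff.2 fun a ha b hb => (Finset.mem_union.1 (hq hb)).elim
    (lCommute_iff.1 hs a ha b) (lCommute_iff.1 ht a ha b)

end LCommute

/-! ### Equivalence of words -/

theorem LSwapStep.symm {x y : Word G} (h : LSwapStep G x y) : LSwapStep G y x := by
  obtain ⟨a, b, s, t, hst, rfl, rfl⟩ := h
  exact ⟨a, b, t, s, hst.symm, rfl, rfl⟩

namespace WEquiv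

theorem refl (x : Word G) : WEquiv G x x := Relation.ReflTransGen.refl

theorem trans {x y z : Word G} (h : WEquiv G x y) (h' : WEquiv G y z) : WEquiv G x z :=
  Relation.ReflTransGen.trans h h'

theorem symm {x y : Word G} (h : WEquiv G x y) : WEquiv G y x :=
  haveI : Std.Symm (LSwapStep G) := ⟨fun _ _ => LSwapStep.symm⟩
  Std.Symm.symm (r := Relation.ReflTransGen (LSwapStep G)) _ _ h

theorem append_left (a : Word G) {x y : Word G} (h : WEquiv G x y) :
    WEquiv G (a ++ x) (a ++ y) := by
  refine Relation.ReflTransGen.lift (a ++ ·) ?_ _ _ h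
  rintro _ _ ⟨c, d, s, t, hst, rfl, rfl⟩
  exact ⟨a ++ c, d, s, t, hst, by simp, by simp⟩

theorem append_right (b : Word G) {x y : Word G} (h : WEquiv G x y) :
    WEquiv G (x ++ b) (y ++ b) := by
  refine Relation.ReflTransGen.lift (· ++ b) ?_ _ _ h
  rintro _ _ ⟨c, d, s, t, hst, rfl, rfl⟩
  exact ⟨c, d ++ b, s, t, hst, by simp, by simp⟩

theorem perm {x y : Word G} (h : WEquiv G x y) : x.Perm y := by
  induction h with
  | refl => exact List.Perm.refl _
  | tail _ hstep ih =>
    obtain ⟨c, d, s, t, -, rfl, rfl⟩ := hstep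
    exact ih.trans ((List.Perm.swap t s d).append_left c)

end WEquiv

theorem wEquiv_cons_append {s : Letter G} {b : Word G} (h : ∀ r ∈ b, LCommute G s r)
    (c : Word G) : WEquiv G (s :: (b ++ c)) (b ++ s :: c) := by
  induction b with
  | nil => exact .refl _
  | cons q b ih =>
    rw [List.forall_mem_cons] at h
    exact .head ⟨[], b ++ c, s, q, h.1, rfl, rfl⟩ ((ih h.2).append_left [q])

theorem wEquiv_append_comm {b c : Word G} (h : WCommute G b c) : WEquiv G (b ++ c) (c ++ b) := by
  induction b with
  | nil => simpa using WEquiv.refl c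
  | cons s b ih =>
    have hsc := wEquiv_cons_append (h s List.mem_cons_self) b
    exact ((ih fun r hr => h r (List.mem_cons_of_mem s hr)).append_left [s]).trans hsc

theorem LSwapStep.exists_eq_append_cons {a b w : Word G} {t : Letter G}
    (h : LSwapStep G (a ++ t :: b) w) (hb : ∀ r ∈ b, LCommute G t r) :
    ∃ a' b', w = a' ++ t :: b' ∧ WEquiv G (a ++ b) (a' ++ b') ∧ ∀ r ∈ b', LCommute G t r := by
  obtain ⟨c, d, p, q, hpq, hw, rfl⟩ := h
  rcases List.append_eq_append_iff.1 hw with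
    ⟨_ | ⟨_, e⟩, rfl, htb⟩ | ⟨_ | ⟨_, _ | ⟨_, e⟩⟩, rfl, hpqd⟩
  · obtain ⟨rfl, rfl⟩ := List.cons.inj htb
    exact ⟨a ++ [q], d, by simp, by simpa using WEquiv.refl _, fun r hr => hb r (by simp [hr])⟩
  · simp only [List.cons_append, List.cons.injEq] at htb
    obtain ⟨rfl, rfl⟩ := htb
    refine ⟨a, e ++ q :: p :: d, by simp, .single ⟨a ++ e, d, p, q, hpq, by simp, by simp⟩, ?_⟩
    exact fun r hr => hb r (by simp only [List.mem_append, List.mem_cons] at hr ⊢; tauto)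
  · obtain ⟨rfl, rfl⟩ := List.cons.inj hpqd
    exact ⟨c ++ [q], d, by simp, by simpa using WEquiv.refl _, fun r hr => hb r (by simp [hr])⟩
  · simp only [List.cons_append, List.nil_append, List.cons.injEq] at hpqd
    obtain ⟨rfl, rfl, rfl⟩ := hpqd
    exact ⟨c, p :: d, rfl, by simpa using WEquiv.refl _, List.forall_mem_cons.2 ⟨hpq.symm, hb⟩⟩
  · simp only [List.cons_append, List.cons.injEq] at hpqd
    obtain ⟨rfl, rfl, rfl⟩ := hpqd
    exact ⟨c ++ q :: p :: e, b, by simp, .single ⟨c, e ++ b, p, q, hpq, by simp, by simp⟩, hb⟩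

theorem WEquiv.exists_eq_append_cons {x w : Word G} {t : Letter G} (h : WEquiv G (x ++ [t]) w) :
    ∃ a b, w = a ++ t :: b ∧ WEquiv G x (a ++ b) ∧ ∀ r ∈ b, LCommute G t r := by
  induction h with
  | refl => exact ⟨x, [], rfl, by simpa using WEquiv.refl x, by simp⟩
  | tail _ hstep ih =>
    obtain ⟨a, b, rfl, hx, hb⟩ := ih
    obtain ⟨a', b', rfl, hab, hb'⟩ := hstep.exists_eq_append_cons hb
    exact ⟨a', b', rfl, hx.trans hab, hb'⟩

/-! ### Reduced words -/

/-- `t`, pushed into `w` from the left past letters commuting with it, meets an occurrence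
of `s`. -/
def Reaches (t s : Letter G) (w : Word G) : Prop :=
  ∃ b c, w = b ++ s :: c ∧ ∀ r ∈ b, LCommute G t r

/-- `s` is comparable with a letter `t` of `w` next to which the smaller of the two can be moved in
`s·w`. This makes `s·w` non-reduced. -/
def Clashes (s : Letter G) (w : Word G) : Prop :=
  ∃ t, (s.1 ⊆ t.1 ∧ Reaches s t w) ∨ (t.1 ⊆ s.1 ∧ Reaches t t w)

theorem reaches_cons {t s q : Letter G} {w : Word G} :
    Reaches t s (q :: w) ↔ s = q ∨ LCommute G t q ∧ Reaches t s w := by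
  constructor
  · rintro ⟨_ | ⟨_, b⟩, c, hw, hb⟩
    · exact Or.inl (List.cons.inj hw).1.symm
    · obtain ⟨rfl, rfl⟩ := List.cons.inj hw
      rw [List.forall_mem_cons] at hb
      exact Or.inr ⟨hb.1, b, c, rfl, hb.2⟩
  · rintro (rfl | ⟨hq, b, c, rfl, hb⟩)
    · exact ⟨[], w, rfl, by simp⟩
    · exact ⟨q :: b, c, rfl, List.forall_mem_cons.2 ⟨hq, hb⟩⟩

theorem Reaches.swapStep {t s : Letter G} {w w' : Word G} (hts : t.1 ⊆ s.1)
    (hw : LSwapStep G w w') (h : Reaches t s w) : Reaches t s w' := by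
  obtain ⟨a, b, p, q, hpq, rfl, rfl⟩ := hw
  induction a with
  | nil =>
    simp only [List.nil_append, reaches_cons] at h ⊢
    rcases h with rfl | ⟨hp, rfl | ⟨hq, h⟩⟩
    · exact Or.inr ⟨hpq.mono hts subset_rfl, Or.inl rfl⟩
    · exact Or.inl rfl
    · exact Or.inr ⟨hq, Or.inr ⟨hp, h⟩⟩
  | cons r a ih =>
    simp only [List.cons_append, reaches_cons] at h ⊢
    exact h.imp_right (And.imp_right ih)

theorem Clashes.swapStep {s : Letter G} {w w' : Word G} (hw : LSwapStep G w w')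
    (h : Clashes s w) : Clashes s w' := by
  obtain ⟨t, ⟨hst, h⟩ | ⟨hts, h⟩⟩ := h
  · exact ⟨t, Or.inl ⟨hst, h.swapStep hst hw⟩⟩
  · exact ⟨t, Or.inr ⟨hts, h.swapStep subset_rfl hw⟩⟩

theorem clashes_cons_of_lCommute {p q : Letter G} {w : Word G} (hpq : LCommute G p q) :
    Clashes p (q :: w) ↔ Clashes p w := by
  simp only [Clashes, reaches_cons]
  refine exists_congr fun t => or_congr (and_congr_right fun hpt => ?_)
    (and_congr_right fun htp => ?_)
  · have htq : t ≠ q := by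
      rintro rfl
      exact hpq.not_subset hpt
    simp only [htq, hpq, false_or, true_and]
  · have htq : t ≠ q := by
      rintro rfl
      exact hpq.symm.not_subset htp
    simp only [htq, hpq.mono htp subset_rfl, false_or, true_and]

theorem wIsReduced_cons {s : Letter G} {w : Word G} :
    WIsReduced G (s :: w) ↔ ¬ Clashes s w ∧ WIsReduced G w := by
  constructor
  · refine fun h => ⟨?_, ?_⟩
    · rintro ⟨t, ⟨hst, b, c, rfl, hb⟩ | ⟨hts, b, c, rfl, hb⟩⟩
      · exact h ⟨[], b, c, s, t, rfl, Or.inl ⟨hst, hb⟩⟩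
      · exact h ⟨[], b, c, s, t, rfl, Or.inr ⟨hts, hb⟩⟩
    · rintro ⟨a, b, c, p, q, rfl, hpq⟩
      exact h ⟨s :: a, b, c, p, q, rfl, hpq⟩
  · rintro ⟨hs, hw⟩ ⟨_ | ⟨_, a⟩, b, c, p, q, hsw, hpq⟩
    · obtain ⟨rfl, rfl⟩ := List.cons.inj hsw
      rcases hpq with ⟨hsq, hb⟩ | ⟨hqs, hb⟩
      · exact hs ⟨q, Or.inl ⟨hsq, b, c, rfl, hb⟩⟩
      · exact hs ⟨q, Or.inr ⟨hqs, b, c, rfl, hb⟩⟩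
    · obtain ⟨rfl, rfl⟩ := List.cons.inj hsw
      exact hw ⟨a, b, c, p, q, rfl, hpq⟩

namespace WIsReduced

theorem of_append_right {a b : Word G} (h : WIsReduced G (a ++ b)) : WIsReduced G b := by
  induction a with
  | nil => exact h
  | cons s a ih => exact ih (wIsReduced_cons.1 h).2

theorem swapStep {w w' : Word G} (hw : LSwapStep G w w') (h : WIsReduced G w) :
    WIsReduced G w' := by
  obtain ⟨a, b, p, q, hpq, rfl, rfl⟩ := hw
  induction a with
  | nil =>
    simp only [List.nil_append, wIsReduced_cons, clashes_cons_of_lCommute hpq,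
      clashes_cons_of_lCommute hpq.symm] at h ⊢
    tauto
  | cons r a ih =>
    simp only [List.cons_append, wIsReduced_cons] at h ⊢
    exact ⟨fun hr => h.1 (hr.swapStep ⟨a, b, q, p, hpq.symm, rfl, rfl⟩), ih h.2⟩

theorem wEquiv {w w' : Word G} (hw : WEquiv G w w') (h : WIsReduced G w) : WIsReduced G w' := by
  induction hw with
  | refl => exact h
  | tail _ hstep ih => exact ih.swapStep hstep

theorem eq_singleton {y z : Word G} {s : Letter G} (h : WIsReduced G (y ++ z))
    (hy : ∀ t ∈ y, t.1 ⊆ s.1) (hs : s ∈ y) : y = [s] := by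
  obtain ⟨a, b, rfl⟩ := List.append_of_mem hs
  obtain rfl : b = [] := by
    rcases b with _ | ⟨t, b⟩
    · rfl
    · exact absurd ⟨a, [], b ++ z, s, t, by simp, Or.inr ⟨hy t (by simp), by simp⟩⟩ h
  obtain rfl : a = [] := by
    rcases List.eq_nil_or_concat a with rfl | ⟨a, t, rfl⟩
    · rfl
    · exact absurd ⟨a, [], z, t, s, by simp, Or.inl ⟨hy t (by simp), by simp⟩⟩ h
  rfl

end WIsReduced

theorem WEquiv.reflTransGen_nsStep {x y : Word G} (h : WEquiv G x y) :
    Relation.ReflTransGen (NSStep G) x y :=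
  Relation.ReflTransGen.mono (fun _ _ => Or.inl) _ _ h

theorem exists_nsStep_length_lt {w : Word G} (hw : ¬ WIsReduced G w) :
    ∃ w', Relation.ReflTransGen (NSStep G) w w' ∧ w'.length < w.length := by
  obtain ⟨a, b, c, s, t, rfl, ⟨hst, hb⟩ | ⟨hts, hb⟩⟩ := not_not.1 hw
  · have hswap := ((wEquiv_cons_append hb (t :: c)).append_left a).reflTransGen_nsStep
    exact ⟨a ++ (b ++ t :: c),
      hswap.tail (Or.inr ⟨a ++ b, c, s, t, hst, Or.inl (by simp), by simp⟩), by simp⟩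
  · have hswap := ((wEquiv_cons_append hb c).symm.append_left (a ++ [s])).reflTransGen_nsStep
    rw [List.append_cons a s (b ++ t :: c)]
    exact ⟨a ++ s :: (b ++ c),
      hswap.tail (Or.inr ⟨a, b ++ c, t, s, hts, Or.inr (by simp), rfl⟩), by simp⟩

theorem exists_nsRed (w : Word G) : ∃ r, NSRed G w r := by
  induction hn : w.length using Nat.strong_induction_on generalizing w with
  | _ n ih =>
    by_cases hw : WIsReduced G w
    · exact ⟨w, .refl, hw⟩
    · obtain ⟨w', hww', hlt⟩ := exists_nsStep_length_lt hw
      obtain ⟨r, hr, hred⟩ := ih _ (hn ▸ hlt) w' rfl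
      exact ⟨r, hww'.trans hr, hred⟩

/-! ### The splitting order -/

namespace WPrec

theorem wEquiv_trans {x y z : Word G} (h : WEquiv G x y) (h' : WPrec G y z) : WPrec G x z := by
  obtain ⟨y', ⟨u, v, hv, hsplit, hu⟩, hy'⟩ := Relation.TransGen.head'_iff.1 h'
  exact Relation.TransGen.head'_iff.2 ⟨y', ⟨u, v, hv, hsplit, h.trans hu⟩, hy'⟩

theorem trans_wEquiv {x y z : Word G} (h : WPrec G x y) (h' : WEquiv G y z) : WPrec G x z := by
  obtain ⟨y', hy', ⟨u, v, hv, hsplit, hu⟩⟩ := Relation.TransGen.tail'_iff.1 h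
  exact Relation.TransGen.tail'_iff.2 ⟨y', hy', ⟨u, v, h'.symm.trans hv, hsplit, hu⟩⟩

theorem cons (s : Letter G) {x y : Word G} (h : WPrec G x y) : WPrec G (s :: x) (s :: y) := by
  refine Relation.TransGen.lift (s :: ·) ?_ _ _ h
  rintro _ _ ⟨u, v, hv, ⟨a, b, z, t, rfl, hz, rfl⟩, hu⟩
  exact ⟨_, _, hv.append_left [s], ⟨s :: a, b, z, t, rfl, hz, by simp⟩, hu.append_left [s]⟩

end WPrec

theorem PrecStep.cutExpand {x y : Word G} (h : PrecStep G x y) :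
    Relation.CutExpand (fun s t : Letter G => s.1 ⊂ t.1) (x : Multiset (Letter G)) y := by
  obtain ⟨x', y', hy, ⟨a, b, z, t, rfl, hz, rfl⟩, hx⟩ := h
  rw [Multiset.coe_eq_coe.2 hx.perm, Multiset.coe_eq_coe.2 hy.perm]
  refine ⟨(z : Multiset (Letter G)), t, hz, ?_⟩
  simp only [← Multiset.coe_add, ← Multiset.cons_coe, ← Multiset.singleton_add]
  abel

theorem WPrec.irrefl (x : Word G) : ¬ WPrec G x x := fun h =>
  have hwf : WellFounded fun s t : Letter G => s.1 ⊂ t.1 :=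
    InvImage.wf (fun s : Letter G => s.1) (wellFounded_lt (α := Finset α))
  hwf.cutExpand.transGen.irrefl.irrefl (x : Multiset (Letter G))
    (Relation.TransGen.lift (fun w : Word G => (w : Multiset (Letter G)))
      (fun _ _ hstep => PrecStep.cutExpand hstep) x x h)

namespace WPreceq

theorem refl (x : Word G) : WPreceq G x x := Or.inr (.refl x)

theorem trans {x y z : Word G} (h : WPreceq G x y) (h' : WPreceq G y z) : WPreceq G x z := by
  rcases h with h | h <;> rcases h' with h' | h'
  · exact Or.inl (Relation.TransGen.trans h h')
  · exact Or.inl (h.trans_wEquiv h')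
  · exact Or.inl (h'.wEquiv_trans h)
  · exact Or.inr (h.trans h')

theorem cons (s : Letter G) {x y : Word G} (h : WPreceq G x y) : WPreceq G (s :: x) (s :: y) :=
  h.imp (WPrec.cons s) (WEquiv.append_left [s])

theorem antisymm {x y : Word G} (h : WPreceq G x y) (h' : WPreceq G y x) : WEquiv G x y :=
  h.elim (fun hxy => h'.elim
    (fun hyx => absurd (Relation.TransGen.trans hxy hyx) (WPrec.irrefl x)) WEquiv.symm) id

end WPreceq

theorem IsSplitting.wPreceq_cons {y : Word G} {s : Letter G} (h : IsSplitting G y s)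
    (z : Word G) : WPreceq G (y ++ z) (s :: z) :=
  Or.inl (.single ⟨y ++ z, s :: z, .refl _, ⟨[], z, y, s, rfl, h, rfl⟩, .refl _⟩)

/-! ### Domination -/

/-- `Dominated x v`: up to equivalence, `x` is obtained from `v` by replacing every letter by a
word in subsets of it, proper or not. On arbitrary words this expresses `[x] ≼ v`. -/
def Dominated : Word G → Word G → Prop
  | x, [] => x = []
  | x, s :: v => ∃ y z, WEquiv G x (y ++ z) ∧ (∀ r ∈ y, r.1 ⊆ s.1) ∧ Dominated z v

theorem dominated_nil {x : Word G} : Dominated x [] ↔ x = [] := Iff.rfl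

theorem dominated_cons {x v : Word G} {s : Letter G} : Dominated x (s :: v) ↔
    ∃ y z, WEquiv G x (y ++ z) ∧ (∀ r ∈ y, r.1 ⊆ s.1) ∧ Dominated z v := Iff.rfl

theorem dominated_singleton {x : Word G} {s : Letter G} :
    Dominated x [s] ↔ ∀ r ∈ x, r.1 ⊆ s.1 := by
  simp only [dominated_cons, dominated_nil]
  constructor
  · rintro ⟨y, _, hx, hy, rfl⟩ r hr
    exact hy r (by simpa using hx.perm.mem_iff.1 hr)
  · exact fun h => ⟨x, [], by simpa using WEquiv.refl x, h, rfl⟩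

namespace Dominated

theorem wEquiv_left {x x' v : Word G} (hx : WEquiv G x x') (h : Dominated x' v) :
    Dominated x v := by
  cases v with
  | nil =>
    obtain rfl := dominated_nil.1 h
    exact List.perm_nil.1 hx.perm
  | cons s v =>
    obtain ⟨y, z, hx', hy, hz⟩ := dominated_cons.1 h
    exact ⟨y, z, hx.trans hx', hy, hz⟩

theorem nil (v : Word G) : Dominated [] v := by
  induction v with
  | nil => rfl
  | cons s v ih => exact ⟨[], [], .refl _, by simp, ih⟩

theorem refl (v : Word G) : Dominated v v := by
  induction v with
  | nil => rfl
  | cons s v ih => exact ⟨[s], v, .refl _, by simp, ih⟩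

theorem append {x x' v v' : Word G} (h : Dominated x v) (h' : Dominated x' v') :
    Dominated (x ++ x') (v ++ v') := by
  induction v generalizing x with
  | nil =>
    obtain rfl := dominated_nil.1 h
    exact h'
  | cons s v ih =>
    obtain ⟨y, z, hx, hy, hz⟩ := dominated_cons.1 h
    exact ⟨y, z ++ x', by simpa using hx.append_right x', hy, ih hz⟩

end Dominated

theorem dominated_append {x v v' : Word G} : Dominated x (v ++ v') ↔
    ∃ y z, WEquiv G x (y ++ z) ∧ Dominated y v ∧ Dominated z v' := by
  refine ⟨fun h => ?_, fun ⟨y, z, hx, hy, hz⟩ => .wEquiv_left hx (hy.append hz)⟩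
  induction v generalizing x with
  | nil => exact ⟨[], x, .refl x, rfl, h⟩
  | cons s v ih =>
    obtain ⟨y, z, hx, hy, hz⟩ := dominated_cons.1 h
    obtain ⟨y', z', hz', hy', hz''⟩ := ih hz
    have hyy' : Dominated (y ++ y') (s :: v) := ⟨y, y', .refl _, hy, hy'⟩
    exact ⟨y ++ y', z', by simpa using hx.trans (hz'.append_left y), hyy', hz''⟩

namespace Dominated

theorem exists_mem_subset {x v : Word G} (h : Dominated x v) {r : Letter G} (hr : r ∈ x) :
    ∃ s ∈ v, r.1 ⊆ s.1 := by
  induction v generalizing x with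
  | nil => simp [dominated_nil.1 h] at hr
  | cons s v ih =>
    obtain ⟨y, z, hx, hy, hz⟩ := dominated_cons.1 h
    rcases List.mem_append.1 (hx.perm.mem_iff.1 hr) with hry | hrz
    · exact ⟨s, List.mem_cons_self, hy r hry⟩
    · obtain ⟨q, hq, hrq⟩ := ih hz hrz
      exact ⟨q, List.mem_cons_of_mem s hq, hrq⟩

theorem swapStep_right {x v v' : Word G} (hv : LSwapStep G v v') (h : Dominated x v) :
    Dominated x v' := by
  obtain ⟨a, b, s, t, hst, rfl, rfl⟩ := hv
  obtain ⟨x₁, _, hx, hx₁, y, _, hyz, hy, y', z, hyz', hy', hz⟩ := dominated_append.1 h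
  have hcomm : WCommute G y y' := fun r hr q hq => hst.mono (hy r hr) (hy' q hq)
  have hyy' := (wEquiv_append_comm hcomm).append_right z
  refine dominated_append.2 ⟨x₁, y' ++ (y ++ z), hx.trans (.append_left x₁ (hyz.trans ?_)), hx₁,
    y', y ++ z, .refl _, hy', y, z, .refl _, hy, hz⟩
  simpa using (hyz'.append_left y).trans (by simpa using hyy')

theorem wEquiv_right {x v v' : Word G} (hv : WEquiv G v v') (h : Dominated x v) :
    Dominated x v' := by
  induction hv with
  | refl => exact h
  | tail _ hstep ih => exact ih.swapStep_right hstep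

theorem trans {x v z : Word G} (h : Dominated x v) (h' : Dominated v z) : Dominated x z := by
  induction z generalizing x v with
  | nil => rwa [dominated_nil.1 h'] at h
  | cons s z ih =>
    obtain ⟨y, v', hv, hy, hv'⟩ := dominated_cons.1 h'
    obtain ⟨p, q, hx, hp, hq⟩ := dominated_append.1 (h.wEquiv_right hv)
    refine ⟨p, q, hx, fun r hr => ?_, ih hq hv'⟩
    obtain ⟨t, ht, hrt⟩ := hp.exists_mem_subset hr
    exact hrt.trans (hy t ht)

theorem context (a b : Word G) {x y : Word G} (h : Dominated x y) :
    Dominated (a ++ x ++ b) (a ++ y ++ b) :=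
  ((refl a).append h).append (refl b)

end Dominated

theorem WEquiv.dominated {x y : Word G} (h : WEquiv G x y) : Dominated x y :=
  .wEquiv_left h (.refl y)

theorem PrecStep.dominated {x y : Word G} (h : PrecStep G x y) : Dominated x y := by
  obtain ⟨x', y', hy, ⟨a, b, z, t, rfl, hz, rfl⟩, hx⟩ := h
  have hzt : Dominated z [t] := dominated_singleton.2 fun r hr => (hz r hr).subset
  have hxy := hzt.context a b
  rw [← List.append_cons] at hxy
  exact .wEquiv_left hx (hxy.wEquiv_right hy.symm)

theorem WPreceq.dominated {x y : Word G} (h : WPreceq G x y) : Dominated x y := by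
  rcases h with hprec | hequiv
  · induction hprec with
    | single hstep => exact hstep.dominated
    | tail _ hstep ih => exact ih.trans hstep.dominated
  · exact hequiv.dominated

theorem AbsorbStep.dominated {x y : Word G} (h : AbsorbStep G x y) :
    Dominated x y ∧ Dominated y x := by
  obtain ⟨a, b, s, t, hst, rfl | rfl, rfl⟩ := h
  · have hle : Dominated [s, t] [t] := dominated_singleton.2 (by simp [hst])
    have hge : Dominated [t] [s, t] := (Dominated.nil [s]).append (.refl [t])
    exact ⟨by simpa using hle.context a b, by simpa using hge.context a b⟩
  · have hle : Dominated [t, s] [t] := dominated_singleton.2 (by simp [hst])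
    have hge : Dominated [t] [t, s] := (Dominated.refl [t]).append (.nil [s])
    exact ⟨by simpa using hle.context a b, by simpa using hge.context a b⟩

theorem NSRed.dominated {x r : Word G} (h : NSRed G x r) : Dominated x r ∧ Dominated r x := by
  obtain ⟨h, -⟩ := h
  induction h with
  | refl => exact ⟨.refl x, .refl x⟩
  | tail _ hstep ih =>
    rcases hstep with hswap | habsorb
    · exact ⟨ih.1.swapStep_right hswap, (WEquiv.dominated (.single hswap.symm)).trans ih.2⟩
    · exact ⟨ih.1.trans habsorb.dominated.1, habsorb.dominated.2.trans ih.2⟩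

theorem Dominated.wPreceq {x v : Word G} (hx : WIsReduced G x) (h : Dominated x v) :
    WPreceq G x v := by
  induction v generalizing x with
  | nil =>
    obtain rfl := dominated_nil.1 h
    exact .refl []
  | cons s v ih =>
    obtain ⟨y, z, hxyz, hy, hz⟩ := dominated_cons.1 h
    have hyz : WIsReduced G (y ++ z) := hx.wEquiv hxyz
    have hyzs : WPreceq G (y ++ z) (s :: z) := by
      by_cases hs : s ∈ y
      · exact hyz.eq_singleton hy hs ▸ .refl (s :: z)
      · refine IsSplitting.wPreceq_cons (fun t ht => (hy t ht).ssubset_of_ne fun hts => ?_) z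
        exact hs (Subtype.ext hts ▸ ht)
    exact .trans (Or.inr hxyz) (hyzs.trans ((ih hyz.of_append_right hz).cons s))

theorem WIsReduced.wPreceq_iff_dominated {x v : Word G} (hx : WIsReduced G x) :
    WPreceq G x v ↔ Dominated x v :=
  ⟨WPreceq.dominated, Dominated.wPreceq hx⟩

theorem exists_nsRed_wPreceq_iff_dominated {x v : Word G} :
    (∃ r, NSRed G x r ∧ WPreceq G r v) ↔ Dominated x v := by
  refine ⟨fun ⟨r, hr, hrv⟩ => hr.dominated.1.trans hrv.dominated, fun h => ?_⟩
  obtain ⟨r, hr⟩ := exists_nsRed x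
  exact ⟨r, hr, (hr.dominated.2.trans h).wPreceq hr.2⟩

/-! ### Division -/

theorem IsCommuting.exists_wEquiv_cons {c : Word G} (hc : IsCommuting G c) {q : Letter G}
    (hq : q ∈ c) : ∃ c', WEquiv G c (q :: c') := by
  obtain ⟨a, b, rfl⟩ := List.append_of_mem hq
  have hqa : ∀ r ∈ a, LCommute G q r := fun r hr =>
    ((List.pairwise_append.1 hc).2.2 r hr q List.mem_cons_self).symm
  exact ⟨a ++ b, (wEquiv_cons_append hqa b).symm⟩

theorem IsCommuting.dominated_iff {c y : Word G} (hc : IsCommuting G c) :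
    Dominated y c ↔ ∀ r ∈ y, ∃ q ∈ c, r.1 ⊆ q.1 := by
  refine ⟨fun h r => h.exists_mem_subset, fun h => ?_⟩
  induction y with
  | nil => exact .nil c
  | cons r y ih =>
    rw [List.forall_mem_cons] at h
    obtain ⟨⟨q, hq, hrq⟩, hy⟩ := h
    obtain ⟨c', hcc'⟩ := hc.exists_wEquiv_cons hq
    obtain ⟨y₁, y₂, hyy, hy₁, hy₂⟩ := dominated_cons.1 ((ih hy).wEquiv_right hcc')
    have hry : Dominated (r :: y) (q :: c') :=
      ⟨r :: y₁, y₂, hyy.append_left [r], List.forall_mem_cons.2 ⟨hrq, hy₁⟩, hy₂⟩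
    exact hry.wEquiv_right hcc'.symm

theorem lCommute_of_maximalFor {S : Set (Letter G)}
    (hunion : ∀ q ∈ S, ∀ r ∈ S, ∀ l : Letter G, l.1 = q.1 ∪ r.1 → l ∈ S) {q r : Letter G}
    (hq : MaximalFor (· ∈ S) (fun l : Letter G => l.1) q)
    (hr : MaximalFor (· ∈ S) (fun l : Letter G => l.1) r) (hqr : q ≠ r) : LCommute G q r := by
  by_contra h
  have hl := hunion q hq.1 r hr.1 ⟨q.1 ∪ r.1, not_not.1 h⟩ rfl
  have hrq : r.1 ⊆ q.1 := Finset.subset_union_right.trans (hq.2 hl Finset.subset_union_left)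
  have hqr' : q.1 ⊆ r.1 := Finset.subset_union_left.trans (hr.2 hl Finset.subset_union_right)
  exact hqr (Subtype.ext (hqr'.antisymm hrq))

theorem exists_dominated_iff_forall_mem {S : Set (Letter G)} (hfin : S.Finite)
    (hlower : ∀ q ∈ S, ∀ r : Letter G, r.1 ⊆ q.1 → r ∈ S)
    (hunion : ∀ q ∈ S, ∀ r ∈ S, ∀ l : Letter G, l.1 = q.1 ∪ r.1 → l ∈ S) :
    ∃ c : Word G, ∀ y, Dominated y c ↔ ∀ r ∈ y, r ∈ S := by
  let M : Set (Letter G) := {q | MaximalFor (· ∈ S) (fun l : Letter G => l.1) q}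
  have hM : M.Finite := hfin.subset fun q hq => hq.1
  have hmem : ∀ {q}, q ∈ hM.toFinset.toList ↔ q ∈ M := by simp
  have hcomm : IsCommuting G hM.toFinset.toList :=
    hM.toFinset.nodup_toList.pairwise_of_forall_ne fun q hq r hr =>
      lCommute_of_maximalFor hunion (hmem.1 hq) (hmem.1 hr)
  refine ⟨hM.toFinset.toList, fun y => hcomm.dominated_iff.trans (forall₂_congr fun r _ => ?_)⟩
  constructor
  · rintro ⟨q, hq, hrq⟩
    exact hlower q (hmem.1 hq).1 r hrq
  · intro hr
    obtain ⟨q, ⟨hqS, hrq⟩, hmax⟩ := (hfin.inter_of_left {q | r.1 ⊆ q.1}).exists_maximalFor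
      (fun l : Letter G => l.1) _ ⟨r, hr, Finset.Subset.refl r.1⟩
    exact ⟨q, hmem.2 ⟨hqS, fun l hl hql => hmax ⟨hl, hrq.trans hql⟩ hql⟩, hrq⟩

theorem exists_dominated_iff_subset_and_lCommute (s t : Letter G) :
    ∃ c : Word G, ∀ y, Dominated y c ↔ ∀ r ∈ y, r.1 ⊆ s.1 ∧ LCommute G t r := by
  refine exists_dominated_iff_forall_mem (S := {r | r.1 ⊆ s.1 ∧ LCommute G t r})
    ((finite_setOf_letter_subset s.1).subset fun _ hr => hr.1) ?_ ?_
  · exact fun q hq r hrq => ⟨hrq.trans hq.1, hq.2.mono subset_rfl hrq⟩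
  · exact fun q hq r hr l hl =>
      ⟨hl ▸ Finset.union_subset hq.1 hr.1, .of_subset_union hl.subset hq.2 hr.2⟩

theorem exists_dominated_iff_dominated_and_lCommute (t : Letter G) (v : Word G) :
    ∃ d : Word G, ∀ z, Dominated z d ↔ Dominated z v ∧ ∀ r ∈ z, LCommute G t r := by
  induction v with
  | nil => exact ⟨[], fun z => by simp +contextual [dominated_nil]⟩
  | cons s v ih =>
    obtain ⟨d, hd⟩ := ih
    obtain ⟨c, hc⟩ := exists_dominated_iff_subset_and_lCommute s t
    refine ⟨c ++ d, fun x => ?_⟩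
    simp only [dominated_append, dominated_cons, hc, hd]
    constructor
    · rintro ⟨y, z, hx, hy, hz, hzt⟩
      refine ⟨⟨y, z, hx, fun r hr => (hy r hr).1, hz⟩, fun r hr => ?_⟩
      exact (List.mem_append.1 (hx.perm.mem_iff.1 hr)).elim (fun hr => (hy r hr).2) (hzt r)
    · rintro ⟨⟨y, z, hx, hy, hz⟩, hxt⟩
      have hyz : ∀ r ∈ y ++ z, LCommute G t r := fun r hr => hxt r (hx.perm.mem_iff.2 hr)
      exact ⟨y, z, hx, fun r hr => ⟨hy r hr, hyz r (List.mem_append_left z hr)⟩, hz,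
        fun r hr => hyz r (List.mem_append_right y hr)⟩

theorem wEquiv_append_singleton {t : Letter G} {b : Word G} (h : ∀ r ∈ b, LCommute G t r)
    (a : Word G) : WEquiv G (a ++ b ++ [t]) (a ++ t :: b) := by
  simpa using (wEquiv_cons_append h []).symm.append_left a

theorem dominated_append_singleton_cons {x v : Word G} {s t : Letter G} :
    Dominated (x ++ [t]) (s :: v) ↔ ∃ y z, WEquiv G x (y ++ z) ∧ (∀ r ∈ y, r.1 ⊆ s.1) ∧
      (Dominated (z ++ [t]) v ∨
        t.1 ⊆ s.1 ∧ Dominated z v ∧ ∀ r ∈ z, LCommute G t r) := by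
  constructor
  · rintro ⟨y, z, hx, hy, hz⟩
    obtain ⟨a, b, hyz, hxab, hb⟩ := hx.exists_eq_append_cons
    have hzt : ∀ e, z = e ++ t :: b → Dominated (e ++ b ++ [t]) v := by
      rintro e rfl
      exact .wEquiv_left (wEquiv_append_singleton hb e) hz
    rcases List.append_eq_append_iff.1 hyz with ⟨e, rfl, hze⟩ | ⟨_ | ⟨_, f⟩, rfl, htb⟩
    · exact ⟨y, e ++ b, by simpa using hxab, hy, Or.inl (hzt e hze)⟩
    · exact ⟨a, b, hxab, by simpa using hy, Or.inl (hzt [] htb.symm)⟩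
    · obtain ⟨rfl, rfl⟩ := List.cons.inj htb
      exact ⟨a ++ f, z, by simpa using hxab,
        fun r hr => hy r (by simp only [List.mem_append, List.mem_cons] at hr ⊢; tauto),
        Or.inr ⟨hy t (by simp), hz, fun r hr => hb r (List.mem_append_right f hr)⟩⟩
  · rintro ⟨y, z, hx, hy, hz | ⟨hts, hz, hzt⟩⟩
    · exact ⟨y, z ++ [t], by simpa using hx.append_right [t], hy, hz⟩
    · have hxt := (hx.append_right [t]).trans (wEquiv_append_singleton hzt y)
      exact ⟨y ++ [t], z, by simpa using hxt, by simpa [or_imp, forall_and] using ⟨hy, hts⟩, hz⟩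

theorem Dominated.append_singleton {z v : Word G} {t : Letter G} (h : Dominated z v)
    (hz : ∀ r ∈ z, LCommute G t r) (ht : ∃ s ∈ v, t.1 ⊆ s.1) : Dominated (z ++ [t]) v := by
  induction v generalizing z with
  | nil => simp at ht
  | cons s v ih =>
    obtain ⟨y, z', hyz, hy, hz'⟩ := dominated_cons.1 h
    have hz't : ∀ r ∈ z', LCommute G t r := fun r hr =>
      hz r (hyz.perm.mem_iff.2 (List.mem_append_right y hr))
    refine dominated_append_singleton_cons.2 ⟨y, z', hyz, hy, ?_⟩
    simp only [List.mem_cons, exists_eq_or_imp] at ht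
    rcases ht with hts | htv
    · exact Or.inr ⟨hts, hz', hz't⟩
    · exact Or.inl (ih hz' hz't htv)

theorem exists_dominated_append_singleton_iff {t : Letter G} {v : Word G}
    (h : ∃ s ∈ v, t.1 ⊆ s.1) : ∃ w : Word G, ∀ x, Dominated (x ++ [t]) v ↔ Dominated x w := by
  induction v with
  | nil => simp at h
  | cons s v ih =>
    by_cases htv : ∃ q ∈ v, t.1 ⊆ q.1
    · obtain ⟨w, hw⟩ := ih htv
      refine ⟨s :: w, fun x => ?_⟩
      rw [dominated_append_singleton_cons, dominated_cons]
      refine exists₂_congr fun y z => and_congr_right fun _ => and_congr_right fun _ => ?_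
      rw [← hw]
      exact or_iff_left_of_imp fun ⟨_, hz, hzt⟩ => hz.append_singleton hzt htv
    · simp only [List.mem_cons, exists_eq_or_imp] at h
      have hts : t.1 ⊆ s.1 := h.resolve_right htv
      have hnot : ∀ z, ¬ Dominated (z ++ [t]) v := fun z hz =>
        htv (hz.exists_mem_subset (by simp))
      obtain ⟨d, hd⟩ := exists_dominated_iff_dominated_and_lCommute t v
      refine ⟨s :: d, fun x => ?_⟩
      rw [dominated_append_singleton_cons, dominated_cons]
      simp only [hd, hnot, hts, false_or, true_and]

theorem exists_dominated_append_iff {u v : Word G} (h : Dominated u v) :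
    ∃ w : Word G, ∀ x, Dominated (x ++ u) v ↔ Dominated x w := by
  induction u using List.reverseRecOn generalizing v with
  | nil => exact ⟨v, by simp⟩
  | append_singleton u t ih =>
    obtain ⟨w, hw⟩ := exists_dominated_append_singleton_iff
      (h.exists_mem_subset (r := t) (by simp))
    obtain ⟨w', hw'⟩ := ih ((hw u).1 h)
    exact ⟨w', fun x => by rw [← List.append_assoc, hw, hw']⟩

theorem division_lemma_general (G : SimpleGraph α) (u v : Word G)
    (hle : ∃ r, NSRed G u r ∧ WPreceq G r v) :
    ∃ w : Word G, WIsReduced G w ∧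
      (∀ x : Word G, WIsReduced G x →
        ((∃ r, NSRed G (x ++ u) r ∧ WPreceq G r v) ↔ WPreceq G x w)) ∧
      (∀ w' : Word G, WIsReduced G w' →
        (∀ x : Word G, WIsReduced G x →
          ((∃ r, NSRed G (x ++ u) r ∧ WPreceq G r v) ↔ WPreceq G x w')) →
        WEquiv G w w') := by
  obtain ⟨w₀, hw₀⟩ := exists_dominated_append_iff (exists_nsRed_wPreceq_iff_dominated.1 hle)
  obtain ⟨w, hw⟩ := exists_nsRed w₀
  have hdiv : ∀ x : Word G, WIsReduced G x →
      ((∃ r, NSRed G (x ++ u) r ∧ WPreceq G r v) ↔ WPreceq G x w) := fun x hx => by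
    rw [exists_nsRed_wPreceq_iff_dominated, hw₀, hx.wPreceq_iff_dominated]
    exact ⟨fun h => h.trans hw.dominated.1, fun h => h.trans hw.dominated.2⟩
  refine ⟨w, hw.2, hdiv, fun w' hw' hdiv' => WPreceq.antisymm ?_ ?_⟩
  · exact (hdiv' w hw.2).1 ((hdiv w hw.2).2 (.refl w))
  · exact (hdiv w' hw').1 ((hdiv' w' hw').2 (.refl w'))

end

/-- Division Lemma: given reduced words `u ≼ v`, there is a reduced word `w`
(written `v/u`), unique up to permutation, such that for every reduced word
`x`: `[x·u] ≼ v` iff `x ≼ w`. -/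
theorem division_lemma (G : SimpleGraph V) (u v : Word G)
    (hu : WIsReduced G u) (hv : WIsReduced G v) (hle : WPreceq G u v) :
    ∃ w : Word G, WIsReduced G w ∧
      (∀ x : Word G, WIsReduced G x →
        ((∃ r, NSRed G (x ++ u) r ∧ WPreceq G r v) ↔ WPreceq G x w)) ∧
      (∀ w' : Word G, WIsReduced G w' →
        (∀ x : Word G, WIsReduced G x →
          ((∃ r, NSRed G (x ++ u) r ∧ WPreceq G r v) ↔ WPreceq G x w')) →
        WEquiv G w w') :=
  division_lemma_general G u v ⟨u, ⟨.refl, hu⟩, hle⟩
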